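/- Let G and W be groups acting on a set X with commuting actions (g • (w • x) = w • (g • x) for all g ∈ G, w ∈ W, x ∈ X). Let Ψ ∈ X have trivial stabilizer in G, let N = {w ∈ W : w • Ψ = Ψ}, and let (g_i)_{i∈I} in G and (ν_i)_{i∈I} in W satisfy ν_i • Ψ = g_i • Ψ for all i. Let V be the subgroup of W generated by {ν_i : i ∈ I}. Then N ∩ V equals the set of all elements of W of the form ν_{i_k}^{ε_k} ⋯ ν_{i_2}^{ε_2} ν_{i_1}^{ε_1}, where ((i_1,ε_1),…,(i_k,ε_k)) ranges over finite signed words (i_j ∈ I, ε_j ∈ {1,−1}) such that g_{i_1}^{ε_1} g_{i_2}^{ε_2} ⋯ g_{i_k}^{ε_k} = 1 in G. (Theorem 4: the set N ∩ V is the set of all images wψ of words w in the ρ_i such that w = 1 in Aut(R).) -/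

import Mathlib

/-!
The pairs `(w, h)` with `w • Ψ = h • Ψ` form a subgroup of `W × Gᵐᵒᵖ`: since the actions commute,
`w' • w • Ψ = w' • h • Ψ = h • w' • Ψ = h • h' • Ψ`. So a product of the `ν i` moves `Ψ` as the
reversed product of the `g i` does, and one fixes `Ψ` exactly when the other does.
-/

/-- The product `g_{i₁}^{ε₁} g_{i₂}^{ε₂} ⋯ g_{i_k}^{ε_k}` associated to a finite signed
word `((i₁,ε₁),…,(i_k,ε_k))`, where the Boolean `true` stands for exponent `1` and
`false` for exponent `-1`. -/
def signedProd {G : Type*} [Group G] {I : Type*} (g : I → G) (w : List (I × Bool)) : G :=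
  (w.map (fun p => if p.2 then g p.1 else (g p.1)⁻¹)).prod

section SignedProd

variable {G : Type*} [Group G] {I : Type*} (g : I → G)

theorem signedProd_eq_lift_mk (word : List (I × Bool)) :
    signedProd g word = FreeGroup.lift g (FreeGroup.mk word) := by
  simp only [signedProd, FreeGroup.lift_mk, cond_eq_ite]

theorem signedProd_append (u v : List (I × Bool)) :
    signedProd g (u ++ v) = signedProd g u * signedProd g v := by
  simp only [signedProd, List.map_append, List.prod_append]

theorem mem_closure_range_iff_exists_signedProd {x : G} :
    x ∈ Subgroup.closure (Set.range g) ↔ ∃ word : List (I × Bool), signedProd g word = x := by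
  simp only [← FreeGroup.range_lift_eq_closure, MonoidHom.mem_range, signedProd_eq_lift_mk]
  exact Quot.mk_surjective.exists

end SignedProd

section CommutingActions

variable {G W X : Type*} [Group G] [Group W] [MulAction G X] [MulAction W X]
  [SMulCommClass G W X] {Ψ : X}

theorem mul_smul_eq_mul_smul_of_smul_eq_smul {w w' : W} {h h' : G}
    (hw : w • Ψ = h • Ψ) (hw' : w' • Ψ = h' • Ψ) : (w' * w) • Ψ = (h * h') • Ψ := by
  rw [mul_smul, hw, ← smul_comm, hw', mul_smul]

theorem inv_smul_eq_inv_smul_of_smul_eq_smul {w : W} {h : G} (hw : w • Ψ = h • Ψ) :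
    w⁻¹ • Ψ = h⁻¹ • Ψ := by
  rw [inv_smul_eq_iff, ← smul_comm, hw, inv_smul_smul]

variable {I : Type*} {g : I → G} {ν : I → W}

theorem signedProd_singleton_smul (hν : ∀ i, ν i • Ψ = g i • Ψ) (p : I × Bool) :
    signedProd ν [p] • Ψ = signedProd g [p] • Ψ := by
  obtain ⟨i, _ | _⟩ := p
  · simpa [signedProd] using inv_smul_eq_inv_smul_of_smul_eq_smul (hν i)
  · simpa [signedProd] using hν i

theorem signedProd_reverse_smul (hν : ∀ i, ν i • Ψ = g i • Ψ) (word : List (I × Bool)) :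
    signedProd ν word.reverse • Ψ = signedProd g word • Ψ := by
  induction word with
  | nil => simp [signedProd]
  | cons p word ih =>
    rw [List.reverse_cons, signedProd_append, ← List.singleton_append (l := word),
      signedProd_append]
    exact mul_smul_eq_mul_smul_of_smul_eq_smul (signedProd_singleton_smul hν p) ih

theorem signedProd_reverse_mem_stabilizer_iff (hν : ∀ i, ν i • Ψ = g i • Ψ)
    (word : List (I × Bool)) :
    signedProd ν word.reverse ∈ MulAction.stabilizer W Ψ ↔
      signedProd g word ∈ MulAction.stabilizer G Ψ := by
  simp only [MulAction.mem_stabilizer_iff, signedProd_reverse_smul hν]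

theorem stabilizer_inter_closure_eq_images_of_trivial_words_general
    (hν : ∀ i, ν i • Ψ = g i • Ψ) :
    ((MulAction.stabilizer W Ψ : Set W) ∩ (Subgroup.closure (Set.range ν) : Set W)) =
      {w : W | ∃ word : List (I × Bool),
        signedProd g word ∈ MulAction.stabilizer G Ψ ∧ w = signedProd ν word.reverse} := by
  ext w
  constructor
  · rintro ⟨hw, hwV⟩
    obtain ⟨word, rfl⟩ := (mem_closure_range_iff_exists_signedProd ν).mp hwV
    obtain ⟨word, rfl⟩ := List.reverse_surjective word
    exact ⟨word, (signedProd_reverse_mem_stabilizer_iff hν word).mp hw, rfl⟩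
  · rintro ⟨word, hword, rfl⟩
    exact ⟨(signedProd_reverse_mem_stabilizer_iff hν word).mpr hword,
      (mem_closure_range_iff_exists_signedProd ν).mpr ⟨word.reverse, rfl⟩⟩

end CommutingActions

/-- Theorem 4: with commuting actions of `G` and `W` on `X`, a base point
`Ψ` with trivial `G`-stabilizer, `N` the `W`-stabilizer of `Ψ`, families `(g_i)`, `(ν_i)`
with `ν_i • Ψ = g_i • Ψ`, and `V` the subgroup of `W` generated by the `ν_i`, the set
`N ∩ V` consists exactly of the reversed signed products `ν_{i_k}^{ε_k} ⋯ ν_{i₁}^{ε₁}`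
over signed words with `g_{i₁}^{ε₁} ⋯ g_{i_k}^{ε_k} = 1` in `G`. -/
theorem stabilizer_inter_closure_eq_images_of_trivial_words
    {G W X : Type*} [Group G] [Group W] [MulAction G X] [MulAction W X]
    (hcomm : ∀ (g : G) (w : W) (x : X), g • (w • x) = w • (g • x))
    (Ψ : X) (htriv : ∀ g : G, g • Ψ = Ψ → g = 1)
    {I : Type*} (g : I → G) (ν : I → W) (hν : ∀ i : I, ν i • Ψ = g i • Ψ) :
    ((MulAction.stabilizer W Ψ : Set W) ∩ (Subgroup.closure (Set.range ν) : Set W)) =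
      {w : W | ∃ word : List (I × Bool),
        signedProd g word = 1 ∧ w = signedProd ν word.reverse} := by
  have : SMulCommClass G W X := ⟨hcomm⟩
  have hstab : MulAction.stabilizer G Ψ = ⊥ := (Subgroup.eq_bot_iff_forall _).mpr htriv
  simpa only [hstab, Subgroup.mem_bot] using
    stabilizer_inter_closure_eq_images_of_trivial_words_general hν
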